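/- Let P_i and P_j be real 3×4 matrices of rank 3. Then 𝓕(P_i, P_j) = 0 if and only if P_i and P_j have coincident centers, i.e., the kernel of x ↦ P_i x equals the kernel of x ↦ P_j x. -/

import Mathlib

open Matrix

/-- The fundamental matrix of a camera pair `(P, Q)` of `3 × 4` matrices:
its `(h,k)` entry is `(-1)^(h+k)` times the determinant of the `4 × 4` matrix
obtained by stacking the rows of `P` other than row `k` (in their original order)
on top of the rows of `Q` other than row `h` (in their original order). -/
def fund {K : Type*} [CommRing K] (P Q : Matrix (Fin 3) (Fin 4) K) :
    Matrix (Fin 3) (Fin 3) K :=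
  Matrix.of fun h k =>
    (-1 : K) ^ ((h : ℕ) + (k : ℕ)) *
      (Matrix.of fun r c : Fin 4 =>
          if hr : (r : ℕ) < 2 then P (k.succAbove ⟨(r : ℕ), hr⟩) c
          else Q (h.succAbove ⟨(r : ℕ) - 2, by have := r.isLt; omega⟩) c).det

/-!
The entries of `fund P Q` are, up to sign, the `4 × 4` minors of the stacked `6 × 4` matrix that
take two rows from each camera. By an exchange argument, some such minor is nonzero as soon as `P`
and `Q` have rank at least two and the stacked matrix has rank four. The kernel of the stacked
matrix is the intersection of the two kernels, which for cameras are lines: it is nonzero exactly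
when the lines coincide.
-/

section LinearIndepOn

variable {K V ι : Type*} [DivisionRing K] [AddCommGroup V] [Module K V] {v : ι → V}

lemma ncard_eq_finrank_of_linearIndepOn {s : Set ι} (hs : LinearIndepOn K v s) :
    s.ncard = (v '' s).finrank K := by
  rw [Set.finrank, Set.image_eq_range]
  exact (Module.finrank_eq_nat_card_basis (Module.Basis.span hs)).symm

variable [FiniteDimensional K V]

lemma ncard_le_finrank_of_linearIndepOn {b s : Set ι} (hb : LinearIndepOn K v b) (hbs : b ⊆ s) :
    b.ncard ≤ (v '' s).finrank K :=
  (ncard_eq_finrank_of_linearIndepOn hb).trans_le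
    (Submodule.finrank_mono (Submodule.span_mono (Set.image_mono hbs)))

lemma exists_linearIndepOn_extension_ncard_eq {r s : Set ι} {n : ℕ} (hr : LinearIndepOn K v r)
    (hrs : r ⊆ s) (hrn : r.ncard ≤ n) (hns : n ≤ (v '' s).finrank K) :
    ∃ b, r ⊆ b ∧ b ⊆ s ∧ b.ncard = n ∧ LinearIndepOn K v b := by
  obtain ⟨c, hcs, hrc, hspan, hc⟩ := exists_linearIndepOn_extension hr hrs
  have hnc : n ≤ c.ncard := by
    rw [ncard_eq_finrank_of_linearIndepOn hc]
    exact hns.trans (Submodule.finrank_mono (Submodule.span_le.2 hspan))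
  obtain ⟨b, hrb, hbc, hbn⟩ := Set.exists_subsuperset_card_eq hrc hrn hnc
  exact ⟨b, hrb, hbc.trans hcs, hbn, hc.mono hbc⟩

lemma exists_linearIndepOn_union_of_le_finrank {s t : Set ι} {m n : ℕ}
    (hm : m ≤ (v '' s).finrank K) (hn : n ≤ (v '' t).finrank K)
    (hmn : m + n ≤ (v '' (s ∪ t)).finrank K) :
    ∃ s' ⊆ s, ∃ t' ⊆ t, s'.ncard = m ∧ t'.ncard = n ∧ Disjoint s' t' ∧
      LinearIndepOn K v (s' ∪ t') := by
  obtain ⟨r, -, hrt, hrn, hr⟩ := exists_linearIndepOn_extension_ncard_eq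
    (linearIndepOn_empty K v) t.empty_subset (by simp) hn
  obtain ⟨b, hrb, hbst, hbmn, hb⟩ := exists_linearIndepOn_extension_ncard_eq hr
    (hrt.trans Set.subset_union_right) (by lia) hmn
  have hbtm : (b \ t).ncard ≤ m := by
    have hbfin : b.Finite := hb.finite
    have := Set.ncard_le_ncard (Set.sdiff_subset_sdiff_right hrt) (hbfin.sdiff (t := r))
    have := Set.ncard_sdiff_add_ncard_of_subset hrb hbfin
    lia
  -- Trading the elements of `b` outside `t` for `m` elements of `s` keeps enough of `b` to
  -- complete to `m + n` elements, and all the new elements then come from `t`.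
  obtain ⟨s', hbs', hs's, hs'm, hs'⟩ := exists_linearIndepOn_extension_ncard_eq
    (hb.mono Set.sdiff_subset) (Set.sdiff_subset_iff.2 (by rwa [Set.union_comm])) hbtm hm
  obtain ⟨c, hs'c, hcs'b, hcmn, hc⟩ := exists_linearIndepOn_extension_ncard_eq hs'
    Set.subset_union_left (by lia)
    (hbmn.symm.trans_le (ncard_le_finrank_of_linearIndepOn hb Set.subset_union_right))
  have hct : c \ s' ⊆ t := fun x hx ↦ by
    by_contra hxt
    exact hx.2 (hbs' ⟨(hcs'b hx.1).resolve_left hx.2, hxt⟩)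
  have hcs'n : (c \ s').ncard = n := by
    have := Set.ncard_sdiff_add_ncard_of_subset hs'c hc.finite
    lia
  exact ⟨s', hs's, c \ s', hct, hs'm, hcs'n, Set.disjoint_sdiff_right,
    by rwa [Set.union_sdiff_cancel hs'c]⟩

lemma exists_linearIndepOn_union_iff {s t : Set ι} {m n : ℕ} :
    (∃ s' ⊆ s, ∃ t' ⊆ t, s'.ncard = m ∧ t'.ncard = n ∧ Disjoint s' t' ∧
      LinearIndepOn K v (s' ∪ t')) ↔
    m ≤ (v '' s).finrank K ∧ n ≤ (v '' t).finrank K ∧ m + n ≤ (v '' (s ∪ t)).finrank K := by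
  constructor
  · rintro ⟨s', hs, t', ht, rfl, rfl, hdisj, hli⟩
    have hs' : LinearIndepOn K v s' := hli.mono Set.subset_union_left
    have ht' : LinearIndepOn K v t' := hli.mono Set.subset_union_right
    rw [← Set.ncard_union_eq hdisj hs'.finite ht'.finite]
    exact ⟨ncard_le_finrank_of_linearIndepOn hs' hs, ncard_le_finrank_of_linearIndepOn ht' ht,
      ncard_le_finrank_of_linearIndepOn hli (Set.union_subset_union hs ht)⟩
  · rintro ⟨hm, hn, hmn⟩
    exact exists_linearIndepOn_union_of_le_finrank hm hn hmn

end LinearIndepOn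

lemma ncard_eq_iff_exists_eq_compl_singleton {n : ℕ} {s : Set (Fin (n + 1))} :
    s.ncard = n ↔ ∃ k, s = {k}ᶜ := by
  have hcard : s.ncard + sᶜ.ncard = n + 1 := by
    rw [Set.ncard_add_ncard_compl, Nat.card_fin]
  calc s.ncard = n
    _ ↔ sᶜ.ncard = 1 := by lia
    _ ↔ ∃ k, s = {k}ᶜ :=
      Set.ncard_eq_one.trans (exists_congr fun _ ↦ compl_eq_comm.trans eq_comm)

lemma ker_mulVecLin_fromRows {R m₁ m₂ n : Type*} [CommSemiring R] [Fintype n]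
    (A : Matrix m₁ n R) (B : Matrix m₂ n R) :
    LinearMap.ker (fromRows A B).mulVecLin =
      LinearMap.ker A.mulVecLin ⊓ LinearMap.ker B.mulVecLin := by
  ext x
  simp [fromRows_mulVec, ← Sum.elim_zero_zero, Sum.elim_eq_iff]

lemma fund_apply {R : Type*} [CommRing R] (P Q : Matrix (Fin 3) (Fin 4) R) (h k : Fin 3) :
    fund P Q h k = (-1) ^ ((h : ℕ) + (k : ℕ)) * ((fromRows P Q).submatrix
      (Sum.map k.succAbove h.succAbove ∘ (finSumFinEquiv (m := 2) (n := 2)).symm) id).det := by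
  rw [fund, of_apply]
  congr 2
  ext r c
  fin_cases r <;> rfl

section Field

variable {K : Type*} [Field K]

lemma rank_add_finrank_ker_mulVecLin {m n : Type*} [Fintype n] (A : Matrix m n K) :
    A.rank + Module.finrank K (LinearMap.ker A.mulVecLin) = Fintype.card n := by
  rw [Matrix.rank, LinearMap.finrank_range_add_finrank_ker, Module.finrank_fintype_fun_eq_card]

lemma isAtom_ker_mulVecLin_of_rank_add_one_eq {m n : Type*} [Fintype n] {A : Matrix m n K}
    (hA : A.rank + 1 = Fintype.card n) : IsAtom (LinearMap.ker A.mulVecLin) := by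
  rw [Submodule.isAtom_iff_finrank_eq_one]
  have := rank_add_finrank_ker_mulVecLin A
  lia

lemma card_le_rank_fromRows_iff_disjoint_ker {m₁ m₂ n : Type*} [Fintype n]
    (A : Matrix m₁ n K) (B : Matrix m₂ n K) :
    Fintype.card n ≤ (fromRows A B).rank ↔
      Disjoint (LinearMap.ker A.mulVecLin) (LinearMap.ker B.mulVecLin) := by
  rw [disjoint_iff, ← ker_mulVecLin_fromRows, ← Submodule.finrank_eq_zero (R := K),
    ← rank_add_finrank_ker_mulVecLin (fromRows A B)]
  lia

variable (P Q : Matrix (Fin 3) (Fin 4) K)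

lemma fund_apply_ne_zero_iff (h k : Fin 3) :
    fund P Q h k ≠ 0 ↔
      LinearIndepOn K (fromRows P Q).row (Sum.inl '' {k}ᶜ ∪ Sum.inr '' {h}ᶜ) := by
  have hinj : Function.Injective (Sum.map k.succAbove h.succAbove) :=
    Sum.map_injective.2 ⟨Fin.succAbove_right_injective, Fin.succAbove_right_injective⟩
  have hrange : Set.range (Sum.map k.succAbove h.succAbove) =
      Sum.inl '' {k}ᶜ ∪ Sum.inr '' {h}ᶜ := by
    rw [← Fin.range_succAbove, ← Fin.range_succAbove, ← Set.range_comp, ← Set.range_comp]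
    exact Set.Sum.elim_range _ _
  let M : Matrix (Fin 4) (Fin 4) K := (fromRows P Q).submatrix
    (Sum.map k.succAbove h.succAbove ∘ (finSumFinEquiv (m := 2) (n := 2)).symm) id
  calc fund P Q h k ≠ 0
    _ ↔ M.det ≠ 0 := by
      rw [fund_apply, mul_ne_zero_iff_left (pow_ne_zero _ (neg_ne_zero.2 one_ne_zero))]
    _ ↔ LinearIndependent K M.row := by
      rw [linearIndependent_rows_iff_isUnit, isUnit_iff_isUnit_det, isUnit_iff_ne_zero]
    _ ↔ LinearIndependent K ((fromRows P Q).row ∘ Sum.map k.succAbove h.succAbove) :=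
      linearIndependent_equiv (finSumFinEquiv (m := 2) (n := 2)).symm
        (f := (fromRows P Q).row ∘ Sum.map k.succAbove h.succAbove)
    _ ↔ LinearIndepOn K (fromRows P Q).row (Sum.inl '' {k}ᶜ ∪ Sum.inr '' {h}ᶜ) := by
      rw [← hrange, linearIndepOn_range_iff hinj]

lemma fund_ne_zero_iff :
    fund P Q ≠ 0 ↔ 2 ≤ P.rank ∧ 2 ≤ Q.rank ∧ 4 ≤ (fromRows P Q).rank := by
  have hP : ((fromRows P Q).row '' Set.range Sum.inl).finrank K = P.rank := by
    rw [← Set.range_comp, P.rank_eq_finrank_span_row]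
    rfl
  have hQ : ((fromRows P Q).row '' Set.range Sum.inr).finrank K = Q.rank := by
    rw [← Set.range_comp, Q.rank_eq_finrank_span_row]
    rfl
  have hPQ : ((fromRows P Q).row '' (Set.range Sum.inl ∪ Set.range Sum.inr)).finrank K =
      (fromRows P Q).rank := by
    rw [Set.range_inl_union_range_inr, Set.image_univ, rank_eq_finrank_span_row]
    rfl
  have hne : fund P Q ≠ 0 ↔ ∃ h k, fund P Q h k ≠ 0 := by
    simp [← Matrix.ext_iff]
  simp only [hne, fund_apply_ne_zero_iff]
  rw [← hP, ← hQ, ← hPQ, ← exists_linearIndepOn_union_iff (m := 2) (n := 2)]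
  constructor
  · rintro ⟨h, k, hli⟩
    refine ⟨_, Set.image_subset_range _ _, _, Set.image_subset_range _ _, ?_, ?_,
      Set.disjoint_image_inl_image_inr, hli⟩
    · rw [Set.ncard_image_of_injective _ Sum.inl_injective]
      exact ncard_eq_iff_exists_eq_compl_singleton.2 ⟨k, rfl⟩
    · rw [Set.ncard_image_of_injective _ Sum.inr_injective]
      exact ncard_eq_iff_exists_eq_compl_singleton.2 ⟨h, rfl⟩
  · rintro ⟨s, hs, t, ht, hs2, ht2, -, hli⟩
    obtain ⟨s, rfl⟩ := Set.subset_range_iff_exists_image_eq.1 hs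
    obtain ⟨t, rfl⟩ := Set.subset_range_iff_exists_image_eq.1 ht
    rw [Set.ncard_image_of_injective _ Sum.inl_injective] at hs2
    rw [Set.ncard_image_of_injective _ Sum.inr_injective] at ht2
    obtain ⟨k, rfl⟩ := ncard_eq_iff_exists_eq_compl_singleton.1 hs2
    obtain ⟨h, rfl⟩ := ncard_eq_iff_exists_eq_compl_singleton.1 ht2
    exact ⟨h, k, hli⟩

theorem fund_eq_zero_iff_coincident_centers_general (hP : P.rank = 3) (hQ : Q.rank = 3) :
    fund P Q = 0 ↔ LinearMap.ker P.mulVecLin = LinearMap.ker Q.mulVecLin := by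
  have hkerP : IsAtom (LinearMap.ker P.mulVecLin) :=
    isAtom_ker_mulVecLin_of_rank_add_one_eq (by simp [hP])
  have hkerQ : IsAtom (LinearMap.ker Q.mulVecLin) :=
    isAtom_ker_mulVecLin_of_rank_add_one_eq (by simp [hQ])
  have hdisjoint := card_le_rank_fromRows_iff_disjoint_ker P Q
  rw [Fintype.card_fin] at hdisjoint
  calc fund P Q = 0
    _ ↔ ¬ 4 ≤ (fromRows P Q).rank := by
      rw [← not_ne_iff, fund_ne_zero_iff, hP, hQ]; simp
    _ ↔ ¬ Disjoint (LinearMap.ker P.mulVecLin) (LinearMap.ker Q.mulVecLin) := by rw [hdisjoint]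
    _ ↔ LinearMap.ker P.mulVecLin = LinearMap.ker Q.mulVecLin := by
      rw [hkerP.not_disjoint_iff_le, hkerQ.le_iff_eq hkerP.ne_bot]

end Field

/-- for cameras (rank-3 matrices) `Pi`, `Pj`, the fundamental matrix
vanishes if and only if the two cameras have coincident centers, i.e. the kernels
of `x ↦ Pi x` and `x ↦ Pj x` coincide. -/
theorem fund_eq_zero_iff_coincident_centers (Pi Pj : Matrix (Fin 3) (Fin 4) ℝ)
    (hi : Pi.rank = 3) (hj : Pj.rank = 3) :
    fund Pi Pj = 0 ↔
      LinearMap.ker Pi.mulVecLin = LinearMap.ker Pj.mulVecLin := by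
  exact fund_eq_zero_iff_coincident_centers_general Pi Pj hi hj
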